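/- arXiv:2005.12355 — 2 statements merged into one kernel-verified Lean document; each statement's English description precedes it below -/
import Mathlib

section
/- I(F) coincides with the exhaustive ideal of φ: for every A ⊆ ℕ, μ_n(A) → 0 as n → ∞ if and only if lim_{n→∞} sup_{k∈ℕ} μ_k(A \ {0,1,…,n}) = 0. -/
open Filter

/-- `mu F n A = |A ∩ F n| / |F n|`. -/
noncomputable def mu (F : ℕ → Finset ℕ) (n : ℕ) (A : Set ℕ) : ℝ :=
  (A ∩ (F n : Set ℕ)).ncard / (F n).card

theorem mu_nonneg' (F : ℕ → Finset ℕ) (n : ℕ) (A : Set ℕ) : 0 ≤ mu F n A := by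
  unfold mu; positivity

theorem mu_mono' (F : ℕ → Finset ℕ) (n : ℕ) {A B : Set ℕ} (h : A ⊆ B) :
    mu F n A ≤ mu F n B := by
  unfold mu
  have : (A ∩ (F n : Set ℕ)).ncard ≤ (B ∩ (F n : Set ℕ)).ncard :=
    Set.ncard_le_ncard (Set.inter_subset_inter_left _ h) ((F n).finite_toSet.inter_of_right _)
  gcongr

theorem mu_le_one' (F : ℕ → Finset ℕ) (n : ℕ) (A : Set ℕ) : mu F n A ≤ 1 := by
  unfold mu
  apply div_le_one_of_le₀ _ (by positivity)
  have : (A ∩ (F n : Set ℕ)).ncard ≤ (F n : Set ℕ).ncard :=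
    Set.ncard_le_ncard Set.inter_subset_right (F n).finite_toSet
  rw [Set.ncard_coe_finset] at this
  exact_mod_cast this

theorem mu_le_add' (F : ℕ → Finset ℕ) (k n : ℕ) (A : Set ℕ) :
    mu F k A ≤ mu F k (A \ Set.Iic n) + ((n : ℝ) + 1) / (F k).card := by
  unfold mu
  rw [← add_div]
  have h1 : (A ∩ (F k : Set ℕ)).ncard ≤ (((A \ Set.Iic n) ∩ (F k : Set ℕ)) ∪ Set.Iic n).ncard := by
    apply Set.ncard_le_ncard
    · intro x hx
      by_cases h : x ≤ n
      · exact Or.inr h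
      · exact Or.inl ⟨⟨hx.1, h⟩, hx.2⟩
    · exact ((F k).finite_toSet.inter_of_right _).union (Set.finite_Iic n)
  have h2 := Set.ncard_union_le ((A \ Set.Iic n) ∩ (F k : Set ℕ)) (Set.Iic n)
  have h3 : (Set.Iic n).ncard = n + 1 := by
    rw [← Finset.coe_Iic, Set.ncard_coe_finset, Nat.card_Iic]
  rw [h3] at h2
  have h4 : ((A ∩ (F k : Set ℕ)).ncard : ℝ) ≤
      (((A \ Set.Iic n) ∩ (F k : Set ℕ)).ncard : ℝ) + ((n : ℝ) + 1) := by
    exact_mod_cast h1.trans h2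
  gcongr

/-- `I(F) = Exh(φ)` where `φ(A) = sup_k μ_k(A)`: `μ_n(A) → 0` iff
`sup_k μ_k(A \ {0,…,n}) → 0` as `n → ∞`. -/
theorem stmt5 (F : ℕ → Finset ℕ) (hne : ∀ n, (F n).Nonempty)
    (hcard : Tendsto (fun n => (F n).card) atTop atTop) (A : Set ℕ) :
    Tendsto (fun n => mu F n A) atTop (nhds 0) ↔
      Tendsto (fun n => ⨆ k, mu F k (A \ Set.Iic n)) atTop (nhds 0) := by
  have hbdd : ∀ B : Set ℕ, BddAbove (Set.range fun k => mu F k B) := fun B =>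
    ⟨1, by rintro _ ⟨k, rfl⟩; exact mu_le_one' F k B⟩
  constructor
  · intro h
    rw [Metric.tendsto_atTop] at h ⊢
    intro ε hε
    obtain ⟨N, hN⟩ := h (ε / 2) (by positivity)
    refine ⟨((Finset.range N).biUnion F).sup id, fun n hn => ?_⟩
    have h0 : 0 ≤ ⨆ k, mu F k (A \ Set.Iic n) := Real.iSup_nonneg fun k => mu_nonneg' F k _
    rw [Real.dist_eq, sub_zero, abs_of_nonneg h0]
    refine lt_of_le_of_lt (ciSup_le fun k => ?_) (half_lt_self hε)
    by_cases hk : k < N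
    · have he : (A \ Set.Iic n) ∩ (F k : Set ℕ) = ∅ := by
        ext x
        simp only [Set.mem_inter_iff, Set.mem_sdiff, Set.mem_Iic, Set.mem_empty_iff_false, iff_false]
        rintro ⟨⟨_, h2⟩, h3⟩
        apply h2
        refine le_trans ?_ hn
        exact Finset.le_sup (f := id) (Finset.mem_biUnion.2 ⟨k, Finset.mem_range.2 hk, h3⟩)
      unfold mu
      rw [he]
      simp
      positivity
    · have h1 := hN k (not_lt.1 hk)
      rw [Real.dist_eq, sub_zero] at h1
      exact (mu_mono' F k Set.sdiff_subset).trans ((le_abs_self _).trans h1.le)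
  · intro h
    rw [Metric.tendsto_atTop] at h ⊢
    intro ε hε
    obtain ⟨n, hn⟩ := h (ε / 2) (by positivity)
    have h1 := (le_abs_self _).trans_lt (by simpa [Real.dist_eq] using hn n le_rfl)
    have ht : Tendsto (fun k => ((n : ℝ) + 1) / ((F k).card : ℝ)) atTop (nhds 0) :=
      (tendsto_natCast_atTop_atTop.comp hcard).const_div_atTop _
    obtain ⟨K, hK⟩ := eventually_atTop.1 (ht.eventually (gt_mem_nhds (half_pos hε)))
    refine ⟨K, fun k hk => ?_⟩
    rw [Real.dist_eq, sub_zero, abs_of_nonneg (mu_nonneg' F k A)]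
    have h2 := le_ciSup (hbdd (A \ Set.Iic n)) k
    have h3 := hK k hk
    have h4 := mu_le_add' F k n A
    linarith
end

section
/- The closed linear subspace c_{0,I(F)} = {f ∈ ℓ∞ : for every ε > 0, μ_n({i ∈ ℕ : ε ≤ |f i|}) → 0 as n → ∞} of bounded real sequences that are I(F)-convergent to 0 is not complemented in ℓ∞: there is no continuous linear map P : ℓ∞ → ℓ∞ with P ∘ P = P whose range is c_{0,I(F)}. -/
open Filter

lemma exists_blocks (F : ℕ → Finset ℕ)
    (hcard : Tendsto (fun n => (F n).card) atTop atTop) :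
    ∃ (c : ℕ → ℕ) (G : ℕ → Finset ℕ), (∀ k, k ≤ c k) ∧ (∀ k, G k ⊆ F (c k)) ∧
      (∀ k, (F (c k)).card ≤ 2 * (G k).card) ∧ (∀ j k, j < k → Disjoint (G j) (G k)) := by
  classical
  have h : ∀ (S : Finset ℕ) (N : ℕ), ∃ n, N ≤ n ∧ 2 * S.card ≤ (F n).card := by
    intro S N
    exact ((eventually_ge_atTop N).and (hcard.eventually_ge_atTop (2 * S.card))).exists
  choose c hc1 hc2 using h
  let S : ℕ → Finset ℕ := fun k => Nat.rec ∅ (fun k S => S ∪ F (c S k)) k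
  have hS : ∀ k, S (k+1) = S k ∪ F (c (S k) k) := fun k => rfl
  have hmono : Monotone S := monotone_nat_of_le_succ (fun k => by
    rw [hS]; exact Finset.subset_union_left)
  refine ⟨fun k => c (S k) k, fun k => F (c (S k) k) \ S k, fun k => hc1 _ _,
    fun k => Finset.sdiff_subset, fun k => ?_, fun j k hjk => ?_⟩
  · have h1 := hc2 (S k) k
    have h2 := Finset.le_card_sdiff (S k) (F (c (S k) k))
    dsimp only
    omega
  · have h1 : S (j+1) ≤ S k := hmono hjk
    rw [Finset.disjoint_left]
    intro a ha hb
    rw [Finset.mem_sdiff] at ha hb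
    apply hb.2
    apply h1
    rw [hS]
    exact Finset.mem_union_right _ ha.1

lemma exists_family (F : ℕ → Finset ℕ) (hne : ∀ n, (F n).Nonempty)
    (hcard : Tendsto (fun n => (F n).card) atTop atTop) :
    ∃ A : (ℕ → Bool) → Set ℕ, (∀ x y, x ≠ y → (A x ∩ A y).Finite) ∧
      ∀ x, ¬ Tendsto (fun n => mu F n (A x)) atTop (nhds 0) := by
  classical
  obtain ⟨c, G, hc, hG, hG2, hd⟩ := exists_blocks F hcard
  let e : (ℕ → Bool) → ℕ → ℕ := fun x m => Encodable.encode ((List.range m).map x)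
  have heq : ∀ x y m m', e x m = e y m' → m = m' ∧ ∀ i < m, x i = y i := by
    intro x y m m' h
    have h1 : (List.range m).map x = (List.range m').map y := Encodable.encode_injective h
    have h2 : m = m' := by simpa using congrArg List.length h1
    subst h2
    refine ⟨rfl, fun i hi => ?_⟩
    have := List.map_inj_left.1 h1 i (by simpa using hi)
    exact this
  have hd' : ∀ j k a, a ∈ G j → a ∈ G k → j = k := by
    intro j k a hj hk
    rcases lt_trichotomy j k with h | h | h
    · exact absurd hk (Finset.disjoint_left.1 (hd _ _ h) hj)
    · exact h
    · exact absurd hj (Finset.disjoint_left.1 (hd _ _ h) hk)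
  refine ⟨fun x => ⋃ m, (G (e x m) : Set ℕ), fun x y hxy => ?_, fun x ht => ?_⟩
  · obtain ⟨i, hi⟩ := Function.ne_iff.1 hxy
    apply ((Finset.range (i+1)).biUnion (fun m => G (e x m))).finite_toSet.subset
    rintro a ⟨ha, hb⟩
    simp only [Set.mem_iUnion, Finset.mem_coe] at ha hb
    obtain ⟨m, hm⟩ := ha
    obtain ⟨m', hm'⟩ := hb
    have h1 := heq _ _ _ _ (hd' _ _ _ hm hm')
    have h2 : m ≤ i := by
      by_contra hlt
      exact hi (h1.2 i (by omega))
    simp only [Finset.coe_biUnion, Set.mem_iUnion, Finset.mem_coe, Finset.mem_range]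
    exact ⟨m, by omega, hm⟩
  · have h1 := ht.eventually (gt_mem_nhds (show (0:ℝ) < 1/2 by norm_num))
    obtain ⟨N, hN⟩ := eventually_atTop.1 h1
    have hinj : Function.Injective (e x) := fun m m' h => (heq _ _ _ _ h).1
    obtain ⟨k, ⟨m, rfl⟩, hk⟩ := (Set.infinite_range_of_injective hinj).exists_gt N
    have h2 := hN (c (e x m)) (hk.le.trans (hc _))
    have h3 : (G (e x m)).card ≤
        ((⋃ m, (G (e x m) : Set ℕ)) ∩ (F (c (e x m)) : Set ℕ)).ncard := by
      rw [← Set.ncard_coe_finset]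
      apply Set.ncard_le_ncard
      · intro a ha
        exact ⟨Set.mem_iUnion.2 ⟨m, ha⟩, hG _ ha⟩
      · exact (Finset.finite_toSet _).inter_of_right _
    have h4 := hG2 (e x m)
    have h5 : (0:ℝ) < (F (c (e x m))).card := by exact_mod_cast (hne _).card_pos
    unfold mu at h2
    rw [div_lt_iff₀ h5] at h2
    have h6 : ((F (c (e x m))).card : ℝ) ≤ 2 * (G (e x m)).card := by exact_mod_cast h4
    have h7 : ((G (e x m)).card : ℝ) ≤
        ((⋃ m, (G (e x m) : Set ℕ)) ∩ (F (c (e x m)) : Set ℕ)).ncard := by exact_mod_cast h3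
    linarith

lemma mu_finite (F : ℕ → Finset ℕ)
    (hcard : Tendsto (fun n => (F n).card) atTop atTop) (s : Set ℕ) (hs : s.Finite) :
    Tendsto (fun n => mu F n s) atTop (nhds 0) := by
  have h1 : Tendsto (fun n => (s.ncard : ℝ) / (F n).card) atTop (nhds 0) :=
    Tendsto.div_atTop tendsto_const_nhds (tendsto_natCast_atTop_atTop.comp hcard)
  refine squeeze_zero (fun n => ?_) (fun n => ?_) h1
  · unfold mu; positivity
  · unfold mu
    have : (s ∩ (F n : Set ℕ)).ncard ≤ s.ncard := Set.ncard_le_ncard Set.inter_subset_left hs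
    gcongr

/-- bounded function as an element of `ℓ∞` -/
noncomputable def mkl (f : ℕ → ℝ) (C : ℝ) (h : ∀ i, |f i| ≤ C) : lp (fun _ : ℕ => ℝ) ⊤ :=
  ⟨f, memℓp_infty ⟨C, by rintro _ ⟨i, rfl⟩; exact h i⟩⟩

lemma finite_large (φ : lp (fun _ : ℕ => ℝ) ⊤ →ₗ[ℝ] ℝ) (C : ℝ) (hC : ∀ f, |φ f| ≤ C * ‖f‖)
    (hC0 : 0 ≤ C)
    (hφ : ∀ f : lp (fun _ : ℕ => ℝ) ⊤, {i | f i ≠ 0}.Finite → φ f = 0)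
    (A : (ℕ → Bool) → Set ℕ) (hA : ∀ x y, x ≠ y → (A x ∩ A y).Finite)
    (e : (ℕ → Bool) → lp (fun _ : ℕ => ℝ) ⊤)
    (he : ∀ x i, e x i = (A x).indicator 1 i) (δ : ℝ) (hδ : 0 < δ) :
    {x | δ ≤ |φ (e x)|}.Finite := by
  classical
  by_contra hinf
  obtain ⟨N, hN⟩ := exists_nat_gt (C / δ)
  obtain ⟨T, hT, hTN⟩ := Set.Infinite.exists_subset_card_eq hinf N
  let s : (ℕ → Bool) → ℝ := fun x => SignType.sign (φ (e x))
  have hs : ∀ x, |s x| ≤ 1 := by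
    intro x
    simp only [s]
    cases SignType.sign (φ (e x)) <;> simp
  let g : lp (fun _ : ℕ => ℝ) ⊤ := ∑ x ∈ T, s x • e x
  have hg : ∀ i, g i = ∑ x ∈ T, s x * (A x).indicator 1 i := by
    intro i
    simp only [g]
    rw [lp.coeFn_sum, Finset.sum_apply]
    refine Finset.sum_congr rfl fun x _ => ?_
    rw [lp.coeFn_smul, Pi.smul_apply, he, smul_eq_mul]
  let D : Set ℕ := ⋃ p ∈ T.offDiag, A p.1 ∩ A p.2
  have hD : D.Finite := by
    apply Set.Finite.biUnion (Finset.finite_toSet _)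
    intro p hp
    exact hA _ _ (Finset.mem_offDiag.1 (Finset.mem_coe.1 hp)).2.2
  have hb : ∀ i, |if i ∈ D then 0 else g i| ≤ 1 := by
    intro i
    split_ifs with hi
    · simp
    · rw [hg]
      by_cases hx : ∃ x ∈ T, i ∈ A x
      · obtain ⟨x, hxT, hx⟩ := hx
        rw [Finset.sum_eq_single x]
        · simpa [hx] using hs x
        · intro y hy hyx
          have : i ∉ A y := by
            intro hiy
            apply hi
            simp only [D, Set.mem_iUnion]
            exact ⟨(x, y), Finset.mem_offDiag.2 ⟨hxT, hy, Ne.symm hyx⟩, hx, hiy⟩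
          simp [this]
        · intro h; exact absurd hxT h
      · push Not at hx
        rw [Finset.sum_eq_zero]
        · simp
        · intro x hxT
          simp [hx x hxT]
  let g' := mkl _ 1 hb
  have hn : ‖g'‖ ≤ 1 := lp.norm_le_of_forall_le zero_le_one hb
  have h0 : φ (g - g') = 0 := by
    apply hφ
    apply hD.subset
    intro i hi
    by_contra hiD
    apply hi
    have : g' i = g i := by
      change (if i ∈ D then 0 else g i) = g i
      simp [hiD]
    rw [lp.coeFn_sub, Pi.sub_apply, this, sub_self]
  have h1 : φ g = φ g' := by rw [map_sub] at h0; linarith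
  have h2 : φ g = ∑ x ∈ T, |φ (e x)| := by
    simp only [g, map_sum, map_smul, smul_eq_mul, s]
    exact Finset.sum_congr rfl fun x _ => sign_mul_self _
  have h3 : T.card • δ ≤ ∑ x ∈ T, |φ (e x)| := Finset.card_nsmul_le_sum _ _ _ (fun x hx => hT hx)
  have h4 := hC g'
  have h5 := le_abs_self (φ g')
  rw [div_lt_iff₀ hδ] at hN
  rw [hTN, nsmul_eq_mul] at h3
  nlinarith

/-- The subspace of bounded real sequences that are `I(F)`-convergent to `0`
is not complemented in `ℓ∞`: no continuous linear projection of `ℓ∞` has it as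
its range. -/
theorem stmt12 (F : ℕ → Finset ℕ) (hne : ∀ n, (F n).Nonempty)
    (hcard : Tendsto (fun n => (F n).card) atTop atTop) :
    ¬ ∃ P : lp (fun _ : ℕ => ℝ) ⊤ →L[ℝ] lp (fun _ : ℕ => ℝ) ⊤,
      (∀ f, P (P f) = P f) ∧
      Set.range P =
        {f : lp (fun _ : ℕ => ℝ) ⊤ | ∀ ε : ℝ, 0 < ε →
          Tendsto (fun n => mu F n {i : ℕ | ε ≤ |f i|}) atTop (nhds 0)} := by
  classical
  rintro ⟨P, hP, hR⟩
  obtain ⟨A, hA, hA'⟩ := exists_family F hne hcard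
  have hfin : ∀ f : lp (fun _ : ℕ => ℝ) ⊤, {i | f i ≠ 0}.Finite → P f = f := by
    intro f hf
    have : f ∈ Set.range P := by
      rw [hR]
      intro ε hε
      apply mu_finite F hcard
      apply hf.subset
      intro i hi h0
      simp only [Set.mem_ofPred_eq, h0, abs_zero] at hi
      linarith
    obtain ⟨g, rfl⟩ := this
    exact hP g
  have hind : ∀ x i, |(A x).indicator (1 : ℕ → ℝ) i| ≤ 1 := by
    intro x i
    by_cases h : i ∈ A x <;> simp [h]
  let e : (ℕ → Bool) → lp (fun _ : ℕ => ℝ) ⊤ := fun x => mkl _ 1 (hind x)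
  have he : ∀ x i, e x i = (A x).indicator 1 i := fun x i => rfl
  let φ : ℕ → lp (fun _ : ℕ => ℝ) ⊤ →ₗ[ℝ] ℝ := fun k =>
    { toFun := fun f => (f - P f) k
      map_add' := by
        intro f g
        simp only [map_add, lp.coeFn_sub, lp.coeFn_add, Pi.sub_apply, Pi.add_apply]
        ring
      map_smul' := by
        intro r f
        simp only [map_smul, lp.coeFn_sub, lp.coeFn_smul, Pi.sub_apply, Pi.smul_apply,
          smul_eq_mul, RingHom.id_apply]
        ring }
  have hφ : ∀ k f, φ k f = (f - P f) k := fun k f => rfl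
  have hb : ∀ k f, |φ k f| ≤ (1 + ‖P‖) * ‖f‖ := by
    intro k f
    have h1 : ‖(f - P f) k‖ ≤ ‖f - P f‖ := lp.norm_apply_le_norm ENNReal.top_ne_zero _ _
    have h2 := norm_sub_le f (P f)
    have h3 := P.le_opNorm f
    rw [Real.norm_eq_abs] at h1
    rw [hφ]
    linarith
  have hcount : ∀ k, {x | φ k (e x) ≠ 0}.Countable := by
    intro k
    have : {x | φ k (e x) ≠ 0} ⊆ ⋃ n : ℕ, {x | 1 / ((n:ℝ) + 1) ≤ |φ k (e x)|} := by
      intro x hx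
      obtain ⟨n, hn⟩ := exists_nat_one_div_lt (abs_pos.2 hx)
      exact Set.mem_iUnion.2 ⟨n, hn.le⟩
    refine Set.Countable.mono this (Set.countable_iUnion fun n => Set.Finite.countable ?_)
    refine finite_large (φ k) (1 + ‖P‖) (hb k) (by positivity) ?_ A hA e he _ (by positivity)
    intro f hf
    rw [hφ, hfin f hf, sub_self]
    rfl
  have hall : (⋃ k, {x | φ k (e x) ≠ 0}).Countable := Set.countable_iUnion hcount
  have hex : ∃ x, x ∉ ⋃ k, {x | φ k (e x) ≠ 0} := by
    by_contra h
    push Not at h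
    have h1 : (Set.univ : Set (ℕ → Bool)).Countable := hall.mono (fun x _ => h x)
    have h2 : Countable (ℕ → Bool) := Set.countable_univ_iff.1 h1
    have h3 := Cardinal.mk_le_aleph0_iff.2 h2
    have h4 := Cardinal.cantor Cardinal.aleph0
    have h5 : Cardinal.mk (ℕ → Bool) = 2 ^ Cardinal.aleph0 := by
      rw [← Cardinal.power_def, Cardinal.mk_bool, Cardinal.mk_nat]
    rw [h5] at h3
    exact absurd h4 (not_lt.2 h3)
  obtain ⟨x, hx⟩ := hex
  simp only [Set.mem_iUnion, Set.mem_ofPred_eq, not_exists, not_not] at hx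
  have hz : e x - P (e x) = 0 := by
    ext k
    exact hx k
  have hm : e x ∈ Set.range P := ⟨e x, (sub_eq_zero.1 hz).symm⟩
  rw [hR] at hm
  apply hA' x
  have h1 := hm 1 one_pos
  have h2 : {i : ℕ | (1:ℝ) ≤ |e x i|} = A x := by
    ext i
    rw [Set.mem_ofPred_eq, he]
    by_cases h : i ∈ A x <;> simp [h]
  rwa [h2] at h1
end
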